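/- Let L be a bounded partial order (with least element 0 and greatest element 1), and let κ be a singular strong limit cardinal with κ ≤ |L|. Then ν(L) > κ. If moreover cf(κ) = ℵ₀, then ν(L) > 2^κ. -/

import Mathlib

universe u v w

open Cardinal

/-- A well-ordered chain: a chain whose induced strict order is well-founded. -/
def IsWellChain {L : Type u} [PartialOrder L] (A : Set L) : Prop :=
  IsChain (· ≤ ·) A ∧ A.WellFoundedOn (· < ·)

/-- A co-well-ordered chain: a chain well-ordered under the reverse order. -/
def IsCoWellChain {L : Type u} [PartialOrder L] (A : Set L) : Prop :=
  IsChain (· ≤ ·) A ∧ A.WellFoundedOn (· > ·)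

/-- A subset of a partial order is uniform if it is an antichain, a well-ordered chain,
or a co-well-ordered chain. -/
def IsUniform {L : Type u} [PartialOrder L] (A : Set L) : Prop :=
  IsAntichain (· ≤ ·) A ∨ IsWellChain A ∨ IsCoWellChain A

/-- `mu L` is the least cardinal `m` such that `L` has no uniform subset of cardinality `m`. -/
noncomputable def mu (L : Type u) [PartialOrder L] : Cardinal.{u} :=
  sInf {m : Cardinal.{u} | ¬ ∃ A : Set L, IsUniform A ∧ #A = m}

/-- `nu2 L₁ L₂` is the least cardinal `n` such that there is no family of `n` pairwise
incomparable monotone functions from `L₁` to `L₂` (functions ordered pointwise). -/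
noncomputable def nu2 (L₁ : Type u) (L₂ : Type v) [PartialOrder L₁] [PartialOrder L₂] :
    Cardinal.{max u v} :=
  sInf {n : Cardinal.{max u v} |
    ¬ ∃ S : Set (L₁ → L₂), (∀ f ∈ S, Monotone f) ∧ IsAntichain (· ≤ ·) S ∧ #S = n}

/-- `nu L = nu2 L L`. -/
noncomputable def nu (L : Type u) [PartialOrder L] : Cardinal.{u} := nu2 L L

/-- `muInf L = sup_{n} mu (Lⁿ)` for `n ≥ 1`. -/
noncomputable def muInf (L : Type u) [PartialOrder L] : Cardinal.{u} :=
  ⨆ n : ℕ, mu (Fin (n + 1) → L)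

/-- `nuInf L = sup_{n} nu (Lⁿ, L)` for `n ≥ 1`. -/
noncomputable def nuInf (L : Type u) [PartialOrder L] : Cardinal.{u} :=
  ⨆ n : ℕ, nu2 (Fin (n + 1) → L) L

/-- A function `(Fin n → L) → L` is a polynomial function if it lies in the smallest
sublattice of the function lattice containing all coordinate projections and all
constant functions. -/
def IsPolynomialFn (L : Type u) [Lattice L] (n : ℕ) (f : (Fin n → L) → L) : Prop :=
  f ∈ latticeClosure ({g : (Fin n → L) → L | ∃ i : Fin n, g = fun x => x i} ∪
    {g : (Fin n → L) → L | ∃ c : L, g = fun _ => c})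

/-- A lattice is order polynomially complete if for every `n ≥ 1` every monotone
`n`-ary function is a polynomial function. -/
def OPC (L : Type u) [Lattice L] : Prop :=
  ∀ n : ℕ, 1 ≤ n → ∀ f : (Fin n → L) → L, Monotone f → IsPolynomialFn L n f

/-- The three possible comparison types between distinct blocks of a canonical family. -/
inductive CompType : Type
  | lt
  | gt
  | incomp

/-- The relation on `L` associated to a comparison type. -/
def CompType.rel {L : Type u} [PartialOrder L] : CompType → L → L → Prop
  | .lt, a, b => a < b
  | .gt, a, b => b < a
  | .incomp, a, b => ¬ a ≤ b ∧ ¬ b ≤ a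

/-- A family of subsets of `L` is canonical if each member is uniform, all members are
of the same type, and comparison between elements of distinct members depends only on
the pair of indices. -/
def IsCanonical {L : Type u} [PartialOrder L] {ι : Type v} (A : ι → Set L) : Prop :=
  ((∀ i, IsAntichain (· ≤ ·) (A i)) ∨ (∀ i, IsWellChain (A i)) ∨ (∀ i, IsCoWellChain (A i))) ∧
  ∃ F : ι → ι → CompType, ∀ i j, i ≠ j → ∀ a ∈ A i, ∀ b ∈ A j, (F i j).rel a b

namespace MLemma

/-- Every nonempty subset has a least element. -/
def WO {L : Type u} [PartialOrder L] (A : Set L) : Prop :=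
  ∀ U ⊆ A, U.Nonempty → ∃ m, IsLeast U m

/-- Every principal up-set within `E` is well-ordered. -/
def Good {L : Type u} [PartialOrder L] (E : Set L) : Prop :=
  ∀ e ∈ E, WO (E ∩ Set.Ici e)

/-- There is an antichain of monotone functions of size at least `μ`. -/
def Has (L : Type u) [PartialOrder L] (μ : Cardinal.{u}) : Prop :=
  ∃ S : Set (L → L), (∀ f ∈ S, Monotone f) ∧ IsAntichain (· ≤ ·) S ∧ μ ≤ #S

lemma Has.lt_nu {L : Type u} [PartialOrder L] {μ : Cardinal.{u}} (h : Has L μ) : μ < nu L := by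
  obtain ⟨S, hS, hA, hc⟩ := h
  have hne : {n : Cardinal.{u} |
    ¬ ∃ S : Set (L → L), (∀ f ∈ S, Monotone f) ∧ IsAntichain (· ≤ ·) S ∧ #S = n}.Nonempty := by
    refine ⟨Order.succ #(L → L), ?_⟩
    rintro ⟨T, -, -, hT⟩
    have h1 := mk_set_le T
    rw [hT] at h1
    exact absurd (Order.lt_succ (#(L → L))) (not_lt.2 h1)
  have hmem := csInf_mem hne
  by_contra hlt
  rw [not_lt] at hlt
  apply hmem
  have h2 : nu L ≤ #S := hlt.trans hc
  obtain ⟨T, hTS, hT⟩ := le_mk_iff_exists_subset.1 h2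
  exact ⟨T, fun f hf => hS f (hTS hf), hA.subset hTS, hT⟩

lemma Has.of_fun {L : Type u} [PartialOrder L] {μ : Cardinal.{u}} {T : Type u} (hT : μ ≤ #T)
    (Φ : T → L → L) (hm : ∀ t, Monotone (Φ t)) (hi : ∀ s t, s ≠ t → ¬ Φ s ≤ Φ t) : Has L μ := by
  have hinj : Function.Injective Φ := by
    intro s t h
    by_contra hst
    exact hi s t hst h.le
  refine ⟨Set.range Φ, ?_, ?_, ?_⟩
  · rintro _ ⟨t, rfl⟩; exact hm t
  · rintro _ ⟨s, rfl⟩ _ ⟨t, rfl⟩ hne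
    exact hi s t (fun h => hne (by rw [h]))
  · rw [mk_range_eq Φ hinj]; exact hT

lemma Has.dual {L : Type u} [PartialOrder L] {μ : Cardinal.{u}} (h : Has Lᵒᵈ μ) : Has L μ := by
  obtain ⟨S, hS, hA, hc⟩ := h
  refine Has.of_fun (T := S) hc (fun f x => OrderDual.ofDual (f.1 (OrderDual.toDual x))) ?_ ?_
  · intro f x y hxy
    exact hS f.1 f.2 (show OrderDual.toDual y ≤ OrderDual.toDual x from hxy)
  · intro f g hfg hle
    exact hA g.2 f.2 (fun h => hfg (Subtype.ext h.symm)) (fun x => hle (OrderDual.ofDual x))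

lemma sets {L : Type u} (A : Set L) (hA : A.Infinite) :
    ∃ G : Set A → Set L, (∀ s, G s ⊆ A) ∧ ∀ s t, s ≠ t → ∃ x ∈ G s, x ∉ G t := by
  have : Infinite A := hA.to_subtype
  have h : #(A ⊕ A) = #A := by
    rw [mk_sum, lift_id]; exact add_eq_self (aleph0_le_mk A)
  obtain ⟨e⟩ := Cardinal.eq.1 h
  refine ⟨fun s => {x | ∃ a : A, (a ∈ s ∧ x = e (Sum.inl a)) ∨ (a ∉ s ∧ x = e (Sum.inr a))},
    ?_, ?_⟩
  · rintro s x ⟨a, ⟨-, rfl⟩ | ⟨-, rfl⟩⟩ <;> exact Subtype.coe_prop _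
  · intro s t hst
    have : ∃ a, (a ∈ s ∧ a ∉ t) ∨ (a ∉ s ∧ a ∈ t) := by
      by_contra hcon
      push Not at hcon
      apply hst
      ext a
      have := hcon a
      tauto
    obtain ⟨a, ⟨h1, h2⟩ | ⟨h1, h2⟩⟩ := this
    · refine ⟨e (Sum.inl a), ⟨a, Or.inl ⟨h1, rfl⟩⟩, ?_⟩
      rintro ⟨b, ⟨hb, hbe⟩ | ⟨hb, hbe⟩⟩
      · have := e.injective (Subtype.ext hbe)
        simp only [Sum.inl.injEq] at this
        subst this; exact h2 hb
      · have := e.injective (Subtype.ext hbe)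
        simp at this
    · refine ⟨e (Sum.inr a), ⟨a, Or.inr ⟨h1, rfl⟩⟩, ?_⟩
      rintro ⟨b, ⟨hb, hbe⟩ | ⟨hb, hbe⟩⟩
      · have := e.injective (Subtype.ext hbe)
        simp at this
      · have := e.injective (Subtype.ext hbe)
        simp only [Sum.inr.injEq] at this
        subst this; exact hb h2

lemma Good.insert_top {L : Type u} [PartialOrder L] [BoundedOrder L] {E : Set L} (hE : Good E) :
    Good (insert ⊤ E) := by
  intro e he U hU hne
  by_cases hUE : (U ∩ E).Nonempty
  · obtain ⟨u, hu, huE⟩ := hUE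
    have heE : e ∈ E := by
      rcases he with rfl | he
      · have := (hU hu).2
        rw [Set.mem_Ici, top_le_iff] at this
        rwa [← this]
      · exact he
    obtain ⟨m, hm, hm2⟩ := hE e heE (U ∩ E) (fun x hx => ⟨hx.2, (hU hx.1).2⟩) ⟨u, hu, huE⟩
    refine ⟨m, hm.1, fun x hx => ?_⟩
    rcases (hU hx).1 with rfl | hxE
    · exact le_top
    · exact hm2 ⟨hx, hxE⟩
  · obtain ⟨u, hu⟩ := hne
    have key : ∀ x ∈ U, x = ⊤ := by
      intro x hx
      rcases (hU hx).1 with h | h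
      · exact h
      · exact absurd ⟨x, hx, h⟩ hUE
    exact ⟨u, hu, fun x hx => by rw [key x hx]; exact le_top⟩

open Classical in
lemma extend {L : Type u} [PartialOrder L] [BoundedOrder L] (D : Set L) (p : L → L)
    (hp : StrictMonoOn p D) (hE : Good (p '' D)) (htop : ∀ x ∈ D, p x ≠ ⊤) :
    ∃ F : Set L → L → L, (∀ B, Monotone (F B)) ∧ (∀ B, ∀ x ∈ D, x ∉ B → F B x = p x) ∧
      (∀ B, ∀ x ∈ D, x ∈ B → p x < F B x) := by
  set E := insert ⊤ (p '' D) with hEdef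
  have hG : Good E := hE.insert_top
  have hsig : ∀ x ∈ D, ∃ m, IsLeast (E ∩ Set.Ioi (p x)) m := by
    intro x hx
    refine hG (p x) (Or.inr ⟨x, hx, rfl⟩) _ (fun y hy => ⟨hy.1, le_of_lt hy.2⟩) ⟨⊤, Or.inl rfl, ?_⟩
    exact lt_top_iff_ne_top.2 (htop x hx)
  choose! σ hσ using hsig
  let g : Set L → L → L := fun B x => if x ∈ B then σ x else p x
  have hgE : ∀ B, ∀ x ∈ D, g B x ∈ E := by
    intro B x hx
    by_cases h : x ∈ B
    · simp only [g, h, if_true]; exact (hσ x hx).1.1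
    · simp only [g, h, if_false]; exact Or.inr ⟨x, hx, rfl⟩
  have hg1 : ∀ B, ∀ x ∈ D, p x ≤ g B x := by
    intro B x hx
    by_cases h : x ∈ B
    · simp only [g, h, if_true]; exact le_of_lt (hσ x hx).1.2
    · simp only [g, h, if_false]; exact le_rfl
  have hg2 : ∀ B, ∀ x ∈ D, g B x ≤ σ x := by
    intro B x hx
    by_cases h : x ∈ B
    · simp only [g, h, if_true]; exact le_rfl
    · simp only [g, h, if_false]; exact le_of_lt (hσ x hx).1.2
  have hgm : ∀ B, ∀ x ∈ D, ∀ y ∈ D, x ≤ y → g B x ≤ g B y := by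
    intro B x hx y hy hxy
    rcases hxy.eq_or_lt with rfl | hlt
    · exact le_rfl
    · exact (hg2 B x hx).trans (((hσ x hx).2 ⟨Or.inr ⟨y, hy, rfl⟩, hp hx hy hlt⟩).trans
        (hg1 B y hy))
  let U : Set L → L → Set L := fun B x => {u | u ∈ E ∧ ∀ y ∈ D, y ≤ x → g B y ≤ u}
  have hU : ∀ B x, (∃ y ∈ D, y ≤ x) → ∃ m, IsLeast (U B x) m := by
    rintro B x ⟨y, hy, hyx⟩
    exact hG (g B y) (hgE B y hy) _ (fun u hu => ⟨hu.1, hu.2 y hy hyx⟩)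
      ⟨⊤, Or.inl rfl, fun _ _ _ => le_top⟩
  choose! m hm using hU
  let F : Set L → L → L := fun B x => if (∃ y ∈ D, y ≤ x) then m B x else ⊥
  have hFD : ∀ B, ∀ x ∈ D, F B x = g B x := by
    intro B x hx
    have hex : ∃ y ∈ D, y ≤ x := ⟨x, hx, le_rfl⟩
    simp only [F, if_pos hex]
    refine (hm B x hex).unique ⟨⟨hgE B x hx, fun y hy hyx => hgm B y hy x hx hyx⟩, ?_⟩
    intro u hu
    exact hu.2 x hx le_rfl
  refine ⟨F, ?_, ?_, ?_⟩
  · intro B x x' hxx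
    by_cases hex : ∃ y ∈ D, y ≤ x
    · have hex' : ∃ y ∈ D, y ≤ x' := by
        obtain ⟨y, hy, h⟩ := hex
        exact ⟨y, hy, h.trans hxx⟩
      simp only [F, if_pos hex, if_pos hex']
      apply (hm B x hex).2
      have := (hm B x' hex').1
      exact ⟨this.1, fun y hy h => this.2 y hy (h.trans hxx)⟩
    · simp only [F, if_neg hex]; exact bot_le
  · intro B x hx hB
    rw [hFD B x hx]; simp only [g, hB, if_false]
  · intro B x hx hB
    rw [hFD B x hx]; simp only [g, hB, if_true]; exact (hσ x hx).1.2

/-- Comparison between different blocks is homogeneous; blocks are infinite, avoid top. -/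
structure Fam {L : Type u} [PartialOrder L] [BoundedOrder L] {I : Type u} (A : I → Set L) :
    Prop where
  inf : ∀ i, (A i).Infinite
  top : ∀ i, ∀ x ∈ A i, x ≠ ⊤
  bot : ∀ i, ∀ x ∈ A i, x ≠ ⊥
  hom : ∀ i j, i ≠ j → ∀ a ∈ A i, ∀ a' ∈ A i, ∀ b ∈ A j, ∀ b' ∈ A j, a ≤ b → a' ≤ b'

lemma Fam.ne {L : Type u} [PartialOrder L] [BoundedOrder L] {I : Type u} {A : I → Set L}
    (h : Fam A) {i j : I} {x y : L} (hx : x ∈ A i) (hy : y ∈ A j) (hij : i ≠ j) : x ≠ y := by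
  rintro rfl
  obtain ⟨z, hz, hne⟩ := (h.inf i).nontrivial.exists_ne x
  exact hne (le_antisymm (h.hom i j hij x hx z hz x hy x hy le_rfl)
    (h.hom j i hij.symm x hy x hy x hx z hz le_rfl))

/-- `p` works for all `J` at once. -/
lemma Fam.good {L : Type u} [PartialOrder L] [BoundedOrder L] {I : Type u} {A : I → Set L}
    (h : Fam A) (c : I → L) (hc : ∀ i, c i ∈ A i)
    (hk : (∀ i, IsAntichain (· ≤ ·) (A i)) ∨ (∀ i, WO (A i))) :
    ∃ p : L → L, ∀ J : Set I, Good (c '' J) → StrictMonoOn p (⋃ j ∈ J, A j) ∧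
      Good (p '' (⋃ j ∈ J, A j)) ∧ ∀ x ∈ (⋃ j ∈ J, A j), p x ≠ ⊤ := by
  rcases hk with hk | hk
  · have : ∀ x : L, ∃ y, ∀ i, x ∈ A i → y = c i := by
      intro x
      by_cases hx : ∃ i, x ∈ A i
      · obtain ⟨i, hi⟩ := hx
        refine ⟨c i, fun j hj => ?_⟩
        by_contra hne
        have : i ≠ j := fun h => hne (by rw [h])
        exact h.ne hi hj this rfl
      · exact ⟨x, fun i hi => absurd ⟨i, hi⟩ hx⟩
    choose p hp using this
    refine ⟨p, fun J hJ => ⟨?_, ?_, ?_⟩⟩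
    · intro x hx y hy hxy
      simp only [Set.mem_iUnion] at hx hy
      obtain ⟨i, hi, hx⟩ := hx
      obtain ⟨j, hj, hy⟩ := hy
      have hij : i ≠ j := by
        rintro rfl
        exact hk i hx hy hxy.ne hxy.le
      rw [hp x i hx, hp y j hy]
      exact lt_of_le_of_ne (h.hom i j hij x hx _ (hc i) y hy _ (hc j) hxy.le)
        (h.ne (hc i) (hc j) hij)
    · convert hJ using 1
      ext y
      simp only [Set.mem_image, Set.mem_iUnion]
      constructor
      · rintro ⟨x, ⟨i, hi, hx⟩, rfl⟩
        exact ⟨i, hi, (hp x i hx).symm⟩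
      · rintro ⟨i, hi, rfl⟩
        exact ⟨c i, ⟨i, hi, hc i⟩, hp _ i (hc i)⟩
    · intro x hx
      simp only [Set.mem_iUnion] at hx
      obtain ⟨i, hi, hx⟩ := hx
      rw [hp x i hx]
      exact h.top i _ (hc i)
  · refine ⟨id, fun J hJ => ⟨fun x _ y _ hxy => hxy, ?_, ?_⟩⟩
    · rw [Set.image_id]
      intro d hd U hU hne
      simp only [Set.mem_iUnion] at hd
      obtain ⟨i, hi, hd⟩ := hd
      have hU' : ∀ x ∈ U, ∃ j ∈ J, x ∈ A j ∧ d ≤ x := by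
        intro x hx
        have := hU hx
        simp only [Set.mem_inter_iff, Set.mem_iUnion, Set.mem_Ici] at this
        obtain ⟨⟨j, hj, hxj⟩, hdx⟩ := this
        exact ⟨j, hj, hxj, hdx⟩
      let V : Set L := {v | ∃ j ∈ J, (∃ x ∈ U, x ∈ A j) ∧ v = c j}
      obtain ⟨v, hv, hvl⟩ := hJ (c i) ⟨i, hi, rfl⟩ V (by
        rintro v ⟨j, hj, ⟨x, hxU, hxj⟩, rfl⟩
        refine ⟨⟨j, hj, rfl⟩, ?_⟩
        by_cases hij : i = j
        · subst hij; exact le_rfl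
        · obtain ⟨j', hj', hxj', hdx⟩ := hU' x hxU
          exact h.hom i j hij d hd _ (hc i) x hxj _ (hc j) hdx) (by
        obtain ⟨x, hx⟩ := hne
        obtain ⟨j, hj, hxj, -⟩ := hU' x hx
        exact ⟨c j, j, hj, ⟨x, hx, hxj⟩, rfl⟩)
      obtain ⟨j, hj, ⟨x, hxU, hxj⟩, rfl⟩ := hv
      obtain ⟨m, hm, hml⟩ := hk j (U ∩ A j) Set.inter_subset_right ⟨x, hxU, hxj⟩
      refine ⟨m, hm.1, fun y hy => ?_⟩
      obtain ⟨k, hkJ, hyk, -⟩ := hU' y hy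
      by_cases hjk : j = k
      · subst hjk; exact hml ⟨hy, hyk⟩
      · exact h.hom j k hjk _ (hc j) _ hm.2 _ (hc k) _ hyk (hvl ⟨k, hkJ, ⟨y, hy, hyk⟩, rfl⟩)
    · intro x hx
      simp only [Set.mem_iUnion] at hx
      obtain ⟨i, hi, hx⟩ := hx
      exact h.top i x hx

lemma good_pair {L : Type u} [PartialOrder L] (a b : L) : Good ({a, b} : Set L) := by
  intro e he U hU hne
  have h1 : ∀ x ∈ U, (x = a ∨ x = b) ∧ e ≤ x := fun x hx => by simpa using hU hx
  by_cases heU : e ∈ U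
  · exact ⟨e, heU, fun x hx => (h1 x hx).2⟩
  · obtain ⟨u, hu⟩ := hne
    refine ⟨u, hu, fun x hx => ?_⟩
    have h2 : x ≠ e := fun h => heU (h ▸ hx)
    have h3 : u ≠ e := fun h => heU (h ▸ hu)
    have h4 := (h1 x hx).1
    have h5 := (h1 u hu).1
    have : x = u := by
      simp only [Set.mem_insert_iff, Set.mem_singleton_iff] at he
      grind
    exact this.ge

lemma Fam.part1 {L : Type u} [PartialOrder L] [BoundedOrder L] {I : Type u} {A : I → Set L}
    (h : Fam A) (hk : (∀ i, IsAntichain (· ≤ ·) (A i)) ∨ (∀ i, WO (A i))) (κ : Cardinal.{u})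
    (i₀ : I) (hI : #I ≤ #(A i₀)) (hsup : ∀ μ < κ, ∃ i ≠ i₀, μ < #(A i)) : Has L κ := by
  choose c hc using fun i => (h.inf i).nonempty
  obtain ⟨p, hp⟩ := h.good c hc hk
  have hF : ∀ i : I, ∃ F : Set L → L → L, (∀ B, Monotone (F B)) ∧
      (∀ B, ∀ x ∈ A i₀ ∪ A i, x ∉ B → F B x = p x) ∧
      (∀ B, ∀ x ∈ A i₀ ∪ A i, x ∈ B → p x < F B x) := by
    intro i
    obtain ⟨h1, h2, h3⟩ := hp {i₀, i} (by rw [Set.image_pair]; exact good_pair _ _)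
    rw [Set.biUnion_pair] at h1 h2 h3
    exact extend _ p h1 h2 h3
  choose F hF1 hF2 hF3 using hF
  choose G hG1 hG2 using fun i => sets (A i) (h.inf i)
  have hle : #I ≤ #(Set (A i₀)) := by
    rw [mk_set]; exact hI.trans (cantor _).le
  obtain ⟨ι⟩ := hle
  refine Has.of_fun (T := Σ i : {i : I // i ≠ i₀}, Set (A i.1)) ?_
    (fun t => F t.1.1 (G i₀ (ι t.1.1) ∪ G t.1.1 t.2)) (fun t => hF1 _ _) ?_
  · by_contra hlt
    rw [not_le] at hlt
    obtain ⟨i, hi, hlt2⟩ := hsup _ hlt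
    refine absurd hlt2 (not_lt.2 ?_)
    refine mk_le_of_injective (f := fun a : A i => (⟨⟨i, hi⟩, {a}⟩ :
      Σ i : {i : I // i ≠ i₀}, Set (A i.1))) ?_
    intro a b hab
    simpa using hab
  · rintro ⟨⟨i, hi⟩, s⟩ ⟨⟨j, hj⟩, t⟩ hne hle
    have key : ∃ x, x ∈ A i₀ ∪ A i ∧ x ∈ A i₀ ∪ A j ∧ x ∈ G i₀ (ι i) ∪ G i s ∧
        x ∉ G i₀ (ι j) ∪ G j t := by
      by_cases hij : i = j
      · subst hij
        have hst : s ≠ t := by rintro rfl; exact hne rfl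
        obtain ⟨x, hx, hx'⟩ := hG2 i s t hst
        refine ⟨x, Or.inr (hG1 _ _ hx), Or.inr (hG1 _ _ hx), Or.inr hx, ?_⟩
        rintro (h' | h')
        · exact h.ne (hG1 _ _ hx) (hG1 _ _ h') hi rfl
        · exact hx' h'
      · obtain ⟨x, hx, hx'⟩ := hG2 i₀ (ι i) (ι j) (fun h' => hij (ι.injective h'))
        refine ⟨x, Or.inl (hG1 _ _ hx), Or.inl (hG1 _ _ hx), Or.inl hx, ?_⟩
        rintro (h' | h')
        · exact hx' h'
        · exact h.ne (hG1 _ _ h') (hG1 _ _ hx) hj rfl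
    obtain ⟨x, h1, h2, h3, h4⟩ := key
    have h5 := hF3 i _ x h1 h3
    have h6 := hF2 j _ x h2 h4
    have h7 := hle x
    simp only at h7
    rw [h6] at h7
    exact h5.not_ge h7

lemma good_seq {L : Type u} [PartialOrder L] (s : ℕ → L) :
    ∃ g : ℕ ↪o ℕ, Good (Set.range (s ∘ g)) := by
  obtain ⟨g, hg | hg⟩ := exists_increasing_or_nonincreasing_subseq (· ≤ ·) s
  · refine ⟨g, ?_⟩
    have hm : Monotone (s ∘ g) := by
      intro m n hmn
      rcases hmn.eq_or_lt with rfl | hlt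
      · exact le_rfl
      · exact hg m n hlt
    intro e he U hU hne
    have hex : ∃ n, s (g n) ∈ U := by
      obtain ⟨u, hu⟩ := hne
      obtain ⟨n, rfl⟩ := (hU hu).1
      exact ⟨n, hu⟩
    classical
    refine ⟨s (g (Nat.find hex)), Nat.find_spec hex, ?_⟩
    intro u hu
    obtain ⟨n, rfl⟩ := (hU hu).1
    exact hm (Nat.find_min' hex hu)
  · obtain ⟨g', hg' | hg'⟩ := exists_increasing_or_nonincreasing_subseq (· ≥ ·) (s ∘ g)
    · refine ⟨g'.trans g, ?_⟩
      have hlt : ∀ m n, m < n → ¬ s (g (g' m)) ≤ s (g (g' n)) :=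
        fun m n hmn => hg _ _ (g'.strictMono hmn)
      have hge : ∀ m n, m ≤ n → s (g (g' n)) ≤ s (g (g' m)) := by
        intro m n hmn
        rcases hmn.eq_or_lt with rfl | h
        · exact le_rfl
        · exact hg' m n h
      rintro _ ⟨n, rfl⟩ U hU hne
      have hfin : ({m | s (g (g' m)) ∈ U} : Set ℕ).Finite := by
        refine (Set.finite_Iic n).subset fun m hm => ?_
        by_contra hmn
        rw [Set.mem_Iic, not_le] at hmn
        exact hlt n m hmn (hU hm).2
      have hne' : ({m | s (g (g' m)) ∈ U} : Set ℕ).Nonempty := by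
        obtain ⟨u, hu⟩ := hne
        obtain ⟨m, rfl⟩ := (hU hu).1
        exact ⟨m, hu⟩
      obtain ⟨m, hm, hmax⟩ := hfin.exists_maximal hne'
      refine ⟨s (g (g' m)), hm, ?_⟩
      intro u hu
      obtain ⟨k, rfl⟩ := (hU hu).1
      refine hge k m ?_
      rcases le_total k m with h | h
      · exact h
      · exact hmax hu h
    · refine ⟨g'.trans g, ?_⟩
      have hlt : ∀ m n, s (g (g' m)) ≤ s (g (g' n)) → m = n := by
        intro m n hmn
        rcases lt_trichotomy m n with h | h | h
        · exact absurd hmn (hg _ _ (g'.strictMono h))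
        · exact h
        · exact absurd hmn (hg' _ _ h)
      rintro _ ⟨n, rfl⟩ U hU ⟨u, hu⟩
      have : ∀ x ∈ U, x = s (g (g' n)) := by
        intro x hx
        obtain ⟨⟨m, rfl⟩, h2⟩ := hU hx
        have := hlt n m h2
        subst this; rfl
      exact ⟨u, hu, fun x hx => by rw [this x hx, this u hu]⟩

lemma Fam.part2 {L : Type u} [PartialOrder L] [BoundedOrder L] {I : Type u} {A : I → Set L}
    (h : Fam A) (hk : (∀ i, IsAntichain (· ≤ ·) (A i)) ∨ (∀ i, WO (A i))) (κ : Cardinal.{u})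
    [Infinite I] (hsup : ∀ J : Set I, J.Infinite → ∀ μ < κ, ∃ i ∈ J, μ < #(A i)) :
    Has L (2 ^ κ) := by
  choose c hc using fun i => (h.inf i).nonempty
  obtain ⟨p, hp⟩ := h.good c hc hk
  let e := Infinite.natEmbedding I
  obtain ⟨g, hg⟩ := good_seq (fun n => c (e n))
  let J : Set I := Set.range (fun n => e (g n))
  have hJ : J.Infinite := Set.infinite_range_of_injective (fun m n hmn => g.injective (e.injective hmn))
  obtain ⟨h1, h2, h3⟩ := hp J (by
    rw [← Set.range_comp]; exact hg)
  obtain ⟨F, hF1, hF2, hF3⟩ := extend _ p h1 h2 h3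
  have hsub : ∀ j ∈ J, A j ⊆ ⋃ j ∈ J, A j := fun j hj => Set.subset_biUnion_of_mem hj
  obtain ⟨j₀, hj₀⟩ := hJ.nonempty
  obtain ⟨G, hG1, hG2⟩ := sets (⋃ j ∈ J, A j) ((h.inf j₀).mono (hsub j₀ hj₀))
  refine Has.of_fun (T := Set (⋃ j ∈ J, A j : Set L)) ?_ (fun t => F (G t)) (fun t => hF1 _) ?_
  · rw [mk_set]
    refine power_le_power_left two_ne_zero ?_
    by_contra hlt
    rw [not_le] at hlt
    obtain ⟨i, hi, hlt2⟩ := hsup J hJ _ hlt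
    exact absurd hlt2 (not_lt.2 (mk_le_mk_of_subset (hsub i hi)))
  · intro s t hst hle
    obtain ⟨x, hx, hx'⟩ := hG2 s t hst
    have h5 := hF3 _ x (hG1 _ hx) hx
    have h6 := hF2 _ x (hG1 _ hx) hx'
    have h7 := hle x
    simp only at h7
    rw [h6] at h7
    exact h5.not_ge h7

lemma er {X W : Type u} [PartialOrder X] [LinearOrder W] [WellFoundedLT W]
    (hW : ℵ₀ ≤ #W) (h : 2 ^ #W < #X) :
    ∃ a : W → X, Function.Injective a ∧ ∃ P Q : W → Prop, ∀ β α, β < α →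
      (a β ≤ a α ↔ P β) ∧ (a α ≤ a β ↔ Q β) := by
  classical
  have hne : Nonempty X := by
    rw [← mk_ne_zero_iff]; exact (zero_le.trans_lt h).ne'
  let a : X → W → X := fun x => (wellFounded_lt (α := W)).fix (fun α ih => Classical.epsilon
    (fun y => ∀ β (hβ : β < α), y ≠ ih β hβ ∧ (ih β hβ ≤ y ↔ ih β hβ ≤ x) ∧
      (y ≤ ih β hβ ↔ x ≤ ih β hβ)))
  have ha : ∀ x α, a x α = Classical.epsilon
    (fun y => ∀ β, β < α → y ≠ a x β ∧ (a x β ≤ y ↔ a x β ≤ x) ∧ (y ≤ a x β ↔ x ≤ a x β)) := by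
    intro x α
    exact WellFounded.fix_eq _ _ _
  by_cases hx : ∃ x, ∀ α, a x α ≠ x
  · obtain ⟨x, hx⟩ := hx
    have spec : ∀ α, ∀ β, β < α → a x α ≠ a x β ∧ (a x β ≤ a x α ↔ a x β ≤ x) ∧
        (a x α ≤ a x β ↔ x ≤ a x β) := by
      intro α
      have := Classical.epsilon_spec (p := fun y => ∀ β, β < α → y ≠ a x β ∧
        (a x β ≤ y ↔ a x β ≤ x) ∧ (y ≤ a x β ↔ x ≤ a x β))
        ⟨x, fun β _ => ⟨(hx β).symm, Iff.rfl, Iff.rfl⟩⟩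
      rw [← ha] at this
      exact this
    refine ⟨a x, ?_, fun β => a x β ≤ x, fun β => x ≤ a x β, fun β α hβ => (spec α β hβ).2⟩
    intro α β hab
    by_contra hne
    rcases lt_or_gt_of_ne hne with hl | hl
    · exact (spec β α hl).1 hab.symm
    · exact (spec α β hl).1 hab
  · exfalso
    push Not at hx
    choose r hr using hx
    let code : X → W × (Set W × Set W) :=
      fun x => (r x, {β | a x β ≤ x}, {β | x ≤ a x β})
    have hinj : Function.Injective code := by
      intro x y hxy
      simp only [code, Prod.mk.injEq, Set.ext_iff, Set.mem_ofPred_eq] at hxy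
      obtain ⟨h1, h2, h3⟩ := hxy
      have key : ∀ α, a x α = a y α := by
        intro α
        induction α using (wellFounded_lt (α := W)).induction with
        | _ α ih =>
          rw [ha x α, ha y α]
          congr 1
          funext z
          apply propext
          refine forall_congr' fun β => forall_congr' fun hβ => ?_
          rw [h2 β, h3 β, ih β hβ]
      rw [← hr x, ← hr y, h1, key]
    have h1 := mk_le_of_injective hinj
    rw [mk_prod, mk_prod, lift_id, lift_id, lift_id, mk_set] at h1
    have h2 : ℵ₀ ≤ (2 : Cardinal.{u}) ^ #W := hW.trans (cantor _).le
    have h3 : #W * (2 ^ #W * 2 ^ #W) ≤ 2 ^ #W := by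
      rw [mul_eq_self h2]
      calc _ ≤ (2 : Cardinal.{u}) ^ #W * 2 ^ #W := mul_le_mul_left (cantor _).le _
        _ = _ := mul_eq_self h2
    exact absurd h (not_lt.2 (h1.trans (by simpa using h3)))

lemma unif {L : Type u} [PartialOrder L] (X : Set L) (ρ : Cardinal.{u}) (hρ : ℵ₀ ≤ ρ)
    (h : 2 ^ ρ < #X) : ∃ A ⊆ X, #A = ρ ∧
      (IsAntichain (· ≤ ·) A ∨ WO A ∨ @WO Lᵒᵈ _ A) := by
  have hW : #ρ.ord.ToType = ρ := mk_ord_toType ρ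
  obtain ⟨a, ha, P, Q, hPQ⟩ := er (X := X) (W := ρ.ord.ToType) (by rwa [hW]) (by rwa [hW])
  obtain ⟨⟨k⟩, hk⟩ := infinite_pigeonhole (β := ρ.ord.ToType) (α := ULift.{u} (Prop × Prop))
    (fun w => ⟨(P w, Q w)⟩) (by rwa [hW]) (by
      refine lt_of_lt_of_le (lt_aleph0_of_finite _) ?_
      rw [hW, Ordinal.aleph0_le_cof]
      exact isSuccLimit_ord hρ)
  set V := ((fun w => (⟨(P w, Q w)⟩ : ULift.{u} (Prop × Prop))) ⁻¹' {⟨k⟩}) with hV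
  rw [hW] at hk
  have hVP : ∀ w ∈ V, (P w ↔ k.1) ∧ (Q w ↔ k.2) := by
    intro w hw
    have : (⟨(P w, Q w)⟩ : ULift.{u} (Prop × Prop)) = ⟨k⟩ := hw
    rw [ULift.up.injEq] at this
    rw [← this]; exact ⟨Iff.rfl, Iff.rfl⟩
  have h1 : ∀ β ∈ V, ∀ α, β < α → ((a β).1 ≤ (a α).1 ↔ k.1) ∧ ((a α).1 ≤ (a β).1 ↔ k.2) := by
    intro β hβ α hlt
    have := hPQ β α hlt
    have h2 := hVP β hβ
    exact ⟨this.1.trans h2.1, this.2.trans h2.2⟩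
  let b : ρ.ord.ToType → L := fun w => (a w).1
  have hb : Function.Injective b := fun x y hxy => ha (Subtype.ext hxy)
  refine ⟨b '' V, ?_, ?_, ?_⟩
  · rintro _ ⟨w, -, rfl⟩; exact (a w).2
  · rw [mk_image_eq hb, hk]
  · by_cases k1 : k.1
    · right; left
      intro U hU hne
      have hne' : (V ∩ b ⁻¹' U).Nonempty := by
        obtain ⟨u, hu⟩ := hne
        obtain ⟨w, hw, rfl⟩ := hU hu
        exact ⟨w, hw, hu⟩
      let m := (wellFounded_lt (α := ρ.ord.ToType)).min _ hne'
      have hm := (wellFounded_lt (α := ρ.ord.ToType)).min_mem _ hne'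
      refine ⟨b m, hm.2, fun u hu => ?_⟩
      obtain ⟨w, hw, rfl⟩ := hU hu
      have hnl := (wellFounded_lt (α := ρ.ord.ToType)).not_lt_min _ (show w ∈ V ∩ b ⁻¹' U from ⟨hw, hu⟩)
      rcases (not_lt.1 hnl).eq_or_lt with he | hl
      · exact (congrArg b he).le
      · exact (h1 m hm.1 w hl).1.2 k1
    · by_cases k2 : k.2
      · right; right
        intro U hU hne
        have hne' : (V ∩ b ⁻¹' U).Nonempty := by
          obtain ⟨u, hu⟩ := hne
          obtain ⟨w, hw, rfl⟩ := hU hu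
          exact ⟨w, hw, hu⟩
        let m := (wellFounded_lt (α := ρ.ord.ToType)).min _ hne'
        have hm := (wellFounded_lt (α := ρ.ord.ToType)).min_mem _ hne'
        refine ⟨b m, hm.2, fun u hu => ?_⟩
        obtain ⟨w, hw, rfl⟩ := hU hu
        have hnl := (wellFounded_lt (α := ρ.ord.ToType)).not_lt_min _ (show w ∈ V ∩ b ⁻¹' U from ⟨hw, hu⟩)
        show b w ≤ b m
        rcases (not_lt.1 hnl).eq_or_lt with he | hl
        · exact (congrArg b he).ge
        · exact (h1 m hm.1 w hl).2.2 k2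
      · left
        rintro _ ⟨v, hv, rfl⟩ _ ⟨w, hw, rfl⟩ hne hle
        rcases lt_trichotomy v w with hl | hl | hl
        · exact k1 ((h1 v hv w hl).1.1 hle)
        · exact hne (by rw [hl])
        · exact k2 ((h1 w hw v hl).2.1 hle)

lemma pig {L γ : Type u} (A : Set L) (f : L → γ) (hreg : (#A).IsRegular) (h : #γ < #A) :
    ∃ A' ⊆ A, #A' = #A ∧ ∀ x ∈ A', ∀ y ∈ A', f x = f y := by
  obtain ⟨c, t, ht, h1, h2⟩ := infinite_pigeonhole_set (s := A) (fun x => f x.1) #A le_rfl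
    hreg.aleph0_le (by rwa [hreg.cof_ord])
  exact ⟨t, ht, le_antisymm (mk_le_mk_of_subset ht) h1, fun x hx y hy => (h2 hx).trans (h2 hy).symm⟩

lemma card_two_sets {U : Type u} {s : Cardinal.{u}} (hs : ℵ₀ ≤ s) (hU : #U ≤ s) :
    #(Set U × Set U) ≤ 2 ^ s := by
  have h2 : ℵ₀ ≤ (2 : Cardinal.{u}) ^ s := hs.trans (cantor _).le
  rw [mk_prod, lift_id, mk_set]
  calc _ ≤ (2 : Cardinal.{u}) ^ s * 2 ^ s :=
        mul_le_mul' (power_le_power_left two_ne_zero hU) (power_le_power_left two_ne_zero hU)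
    _ = _ := mul_eq_self h2

lemma canon {L I : Type u} [PartialOrder L] [LinearOrder I] (A : I → Set L) (s : I → Cardinal.{u})
    (hreg : ∀ i, (#(A i)).IsRegular) (hs : ∀ i, ℵ₀ ≤ s i) (hI : ∀ i, #I ≤ s i)
    (hU : ∀ i, #(⋃ j : Set.Iio i, A j : Set L) ≤ s i) (hlt : ∀ i, 2 ^ s i < #(A i)) :
    ∃ A' : I → Set L, (∀ i, A' i ⊆ A i) ∧ (∀ i, #(A' i) = #(A i)) ∧
      ∀ i j, i ≠ j → ∀ a ∈ A' i, ∀ a' ∈ A' i, ∀ b ∈ A' j, ∀ b' ∈ A' j, a ≤ b → a' ≤ b' := by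
  choose B hB1 hB2 hB3 using fun i => pig (A i)
    (fun x => (({u | u.1 ≤ x}, {u | x ≤ u.1}) :
      Set (⋃ j : Set.Iio i, A j : Set L) × Set (⋃ j : Set.Iio i, A j : Set L))) (hreg i)
    ((card_two_sets (hs i) (hU i)).trans_lt (hlt i))
  have hBne : ∀ i, (B i).Nonempty := by
    intro i
    have h0 : #(B i) ≠ 0 := by
      rw [hB2]; exact (aleph0_pos.trans_le (hreg i).aleph0_le).ne'
    exact Set.nonempty_coe_sort.1 (mk_ne_zero_iff.1 h0)
  choose r hr using hBne
  choose A' hA1 hA2 hA3 using fun i => pig (B i)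
    (fun x => (({n | r n ≤ x}, {n | x ≤ r n}) : Set I × Set I)) (by rw [hB2]; exact hreg i)
    (by rw [hB2]; exact (card_two_sets (hs i) (hI i)).trans_lt (hlt i))
  have key1 : ∀ i j, i < j → ∀ a ∈ A' i, ∀ b ∈ A' j, (a ≤ b ↔ a ≤ r j) ∧ (b ≤ a ↔ r j ≤ a) := by
    intro i j hij a ha b hb
    have := hB3 j b (hA1 j hb) (r j) (hr j)
    simp only [Prod.mk.injEq, Set.ext_iff, Set.mem_ofPred_eq] at this
    have hm : a ∈ (⋃ k : Set.Iio j, A k : Set L) :=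
      Set.mem_iUnion.2 ⟨⟨i, hij⟩, hB1 i (hA1 i ha)⟩
    exact ⟨this.1 ⟨a, hm⟩, this.2 ⟨a, hm⟩⟩
  have key2 : ∀ i, ∀ a ∈ A' i, ∀ a' ∈ A' i, ∀ n, (r n ≤ a ↔ r n ≤ a') ∧ (a ≤ r n ↔ a' ≤ r n) := by
    intro i a ha a' ha' n
    have := hA3 i a ha a' ha'
    simp only [Prod.mk.injEq, Set.ext_iff, Set.mem_ofPred_eq] at this
    exact ⟨this.1 n, this.2 n⟩
  refine ⟨A', fun i => (hA1 i).trans (hB1 i), fun i => (hA2 i).trans (hB2 i), ?_⟩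
  intro i j hij a ha a' ha' b hb b' hb' hab
  rcases lt_or_gt_of_ne hij with hl | hl
  · rw [(key1 i j hl a' ha' b' hb').1, (key2 i a' ha' a ha j).2, ← (key1 i j hl a ha b hb).1]
    exact hab
  · rw [(key1 j i hl b' hb' a' ha').2, (key2 j b' hb' b hb i).1, ← (key1 j i hl b hb a ha).2]
    exact hab

lemma WO.mono {L : Type u} [PartialOrder L] {A B : Set L} (h : WO A) (hB : B ⊆ A) : WO B :=
  fun U hU => h U (hU.trans hB)

lemma Fam.dual {L : Type u} [PartialOrder L] [BoundedOrder L] {I : Type u} {A : I → Set L}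
    (h : Fam A) : @Fam Lᵒᵈ _ _ I A :=
  @Fam.mk Lᵒᵈ _ _ I A h.inf h.bot h.top
    (fun i j hij a ha a' ha' b hb b' hb' hab => h.hom j i hij.symm b hb b' hb' a ha a' ha' hab)

lemma sizes (κ : Cardinal.{u}) (hκ : κ.IsStrongLimit) (hsing : κ.ord.cof < κ) :
    ∃ (I : Type u) (_ : LinearOrder I) (s θ : I → Cardinal.{u}), #I = κ.ord.cof ∧
      (∀ i, ℵ₀ ≤ s i) ∧ (∀ i, #I ≤ s i) ∧ (∀ i, Cardinal.sum (fun j : Set.Iio i => θ j) ≤ s i) ∧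
      (∀ i, 2 ^ s i < θ i) ∧ (∀ i, (θ i).IsRegular) ∧ (∀ i, θ i < κ) ∧
      ∀ K : Set I, #K = #I → ∀ μ < κ, ∃ i ∈ K, μ < θ i := by
  have hinf : ℵ₀ ≤ κ := hκ.aleph0_le
  obtain ⟨ι, f, hf, hι⟩ := Ordinal.exists_lsub_cof κ.ord
  let I : Type u := κ.ord.cof.ord.ToType
  have hI : #I = κ.ord.cof := mk_ord_toType _
  have hIinf : ℵ₀ ≤ #I := by
    rw [hI, Ordinal.aleph0_le_cof]; exact isSuccLimit_ord hinf
  have hIio : ∀ i : I, #(Set.Iio i) < #I := by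
    intro i; rw [hI]; exact mk_Iio_toType_ord_lt i
  obtain ⟨e⟩ := Cardinal.eq.1 (hI.trans hι.symm)
  let g : I → Cardinal.{u} := fun i => (f (e i)).card
  have hg : ∀ i, g i < κ := by
    intro i
    rw [← lt_ord, ← hf]
    exact Ordinal.lt_lsub f _
  have hgc : ∀ μ < κ, ∃ i, μ ≤ g i := by
    intro μ hμ
    have : μ.ord < Ordinal.lsub f := by rw [hf]; exact ord_lt_ord.2 hμ
    obtain ⟨x, hx⟩ := Ordinal.lt_lsub_iff.1 this
    refine ⟨e.symm x, ?_⟩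
    simp only [g, Equiv.apply_symm_apply]
    exact ord_le.1 hx
  let st : Cardinal.{u} → Cardinal.{u} := fun s => Order.succ (2 ^ s)
  let θ : I → Cardinal.{u} := (wellFounded_lt (α := I)).fix (fun i ih =>
    st (g i + #I + Cardinal.sum (fun j : Set.Iio i => ih j.1 j.2)))
  let s : I → Cardinal.{u} := fun i => g i + #I + Cardinal.sum (fun j : Set.Iio i => θ j)
  have hθ : ∀ i, θ i = Order.succ (2 ^ s i) := fun i => WellFounded.fix_eq _ _ _
  have hs2 : ∀ i, #I ≤ s i := fun i => (le_add_self).trans (le_self_add)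
  have hs3 : ∀ i, g i ≤ s i := fun i => (le_self_add).trans (le_self_add)
  have hs1 : ∀ i, ℵ₀ ≤ s i := fun i => hIinf.trans (hs2 i)
  have hs4 : ∀ i, Cardinal.sum (fun j : Set.Iio i => θ j) ≤ s i := fun i => le_add_self
  have hlt : ∀ i, 2 ^ s i < θ i := fun i => by rw [hθ]; exact Order.lt_succ _
  have hκθ : ∀ i, θ i < κ := by
    intro i
    induction i using (wellFounded_lt (α := I)).induction with
    | _ i ih =>
      have hsum : Cardinal.sum (fun j : Set.Iio i => θ j) < κ := by
        refine (sum_le_mk_mul_iSup _).trans_lt (mul_lt_of_lt hinf ?_ ?_)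
        · exact ((hIio i).trans_eq hI).trans hsing
        · exact iSup_lt_of_lt_cof_ord ((hIio i).trans_eq hI) (fun j => ih j.1 j.2)
      have : s i < κ := add_lt_of_lt hinf (add_lt_of_lt hinf (hg i) (hI.trans_lt hsing)) hsum
      rw [hθ]
      exact hκ.isSuccLimit.succ_lt (hκ.isStrongPrelimit this)
  have hmono : ∀ i j, i ≤ j → θ i ≤ θ j := by
    intro i j hij
    rcases hij.eq_or_lt with rfl | hl
    · exact le_rfl
    · calc θ i ≤ Cardinal.sum (fun k : Set.Iio j => θ k) :=
            Cardinal.le_sum (fun k : Set.Iio j => θ k) ⟨i, hl⟩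
        _ ≤ s j := hs4 j
        _ ≤ 2 ^ s j := (cantor _).le
        _ ≤ θ j := (hlt j).le
  refine ⟨I, inferInstance, s, θ, hI, hs1, hs2, hs4, hlt, ?_, hκθ, ?_⟩
  · intro i; rw [hθ]; exact isRegular_succ ((hs1 i).trans (cantor _).le)
  · intro K hK μ hμ
    obtain ⟨i, hi⟩ := hgc μ hμ
    have : ∃ k ∈ K, i ≤ k := by
      by_contra hcon
      push Not at hcon
      have h1 : #K ≤ #(Set.Iio i) := mk_le_mk_of_subset (fun k hk => hcon k hk)
      rw [hK] at h1
      exact absurd (hIio i) (not_lt.2 h1)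
    obtain ⟨k, hk, hik⟩ := this
    exact ⟨k, hk, ((hi.trans (hs3 i)).trans_lt ((cantor _).trans (hlt i))).trans_le (hmono i k hik)⟩

lemma final (L : Type u) [PartialOrder L] [BoundedOrder L] (κ : Cardinal.{u})
    (hκ : κ.IsStrongLimit) (hsing : κ.ord.cof < κ) (hL : κ ≤ #L) :
    Has L κ ∧ (κ.ord.cof = ℵ₀ → Has L (2 ^ κ)) := by
  have hinf : ℵ₀ ≤ κ := hκ.aleph0_le
  obtain ⟨I, _, s, θ, hI, hs1, hs2, hs3, hlt, hreg, hκθ, hcof⟩ := sizes κ hκ hsing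
  have hIinf : ℵ₀ ≤ #I := by
    rw [hI, Ordinal.aleph0_le_cof]; exact isSuccLimit_ord hinf
  let X : Set L := {⊥, ⊤}ᶜ
  have hX : κ ≤ #X := by
    have hLi : Infinite L := infinite_iff.2 (hinf.trans hL)
    have : #X = #L := mk_compl_of_infinite _ (by
      refine lt_of_lt_of_le ?_ (hinf.trans hL)
      exact (Set.toFinite ({⊥, ⊤} : Set L)).lt_aleph0)
    rw [this]; exact hL
  choose B hB1 hB2 hB3 using fun i => unif X (θ i) (hreg i).aleph0_le
    ((hκ.isStrongPrelimit (hκθ i)).trans_le hX)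
  obtain ⟨A, hA1, hA2, hA3⟩ := canon B s (fun i => by rw [hB2]; exact hreg i) hs1 hs2
    (fun i => by
      refine (mk_iUnion_le_sum_mk).trans ?_
      simp only [hB2]
      exact hs3 i) (fun i => by rw [hB2]; exact hlt i)
  have hAθ : ∀ i, #(A i) = θ i := fun i => (hA2 i).trans (hB2 i)
  have hFam : Fam A := by
    refine ⟨fun i => ?_, fun i x hx => ?_, fun i x hx => ?_, hA3⟩
    · rw [← Set.infinite_coe_iff, infinite_iff, hAθ]; exact (hreg i).aleph0_le
    · have := hB1 i (hA1 i hx); simp [X] at this; exact this.2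
    · have := hB1 i (hA1 i hx); simp [X] at this; exact this.1
  have hty : ∀ i, ∃ k : ULift.{u} (Fin 3), (k.down = 0 → IsAntichain (· ≤ ·) (A i)) ∧
      (k.down = 1 → WO (A i)) ∧ (k.down = 2 → @WO Lᵒᵈ _ (A i)) := by
    intro i
    rcases hB3 i with h | h | h
    · exact ⟨⟨0⟩, fun _ => h.subset (hA1 i), by simp, by simp⟩
    · exact ⟨⟨1⟩, by simp, fun _ => h.mono (hA1 i), by simp⟩
    · exact ⟨⟨2⟩, by simp, by simp, fun _ => WO.mono (L := Lᵒᵈ) h (hA1 i)⟩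
  choose ty hty using hty
  obtain ⟨k, hk⟩ := infinite_pigeonhole ty hIinf (by
    refine lt_of_lt_of_le (lt_aleph0_of_finite _) ?_
    rw [Ordinal.aleph0_le_cof]
    exact isSuccLimit_ord hIinf)
  let J : Set I := ty ⁻¹' {k}
  have hJ : #J = #I := hk
  have hJinf : Infinite J := by rw [infinite_iff, hJ]; exact hIinf
  let A' : J → Set L := fun j => A j.1
  have hF' : Fam A' := ⟨fun i => hFam.inf _, fun i => hFam.top _, fun i => hFam.bot _,
    fun i j hij => hFam.hom _ _ (fun h => hij (Subtype.ext h))⟩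
  have hcof' : ∀ K : Set J, #K = #I → ∀ μ < κ, ∃ i ∈ K, μ < #(A' i) := by
    intro K hK μ hμ
    obtain ⟨i, ⟨j, hj, rfl⟩, hi⟩ := hcof (Subtype.val '' K)
      (by rw [mk_image_eq Subtype.val_injective, hK]) μ hμ
    exact ⟨j, hj, by simp only [A']; rw [hAθ]; exact hi⟩
  obtain ⟨i₀⟩ : Nonempty J := inferInstance
  have c1 : #J ≤ #(A' i₀) := by
    simp only [A']
    rw [hJ, hAθ]
    exact (hs2 i₀.1).trans ((cantor _).le.trans (hlt i₀.1).le)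
  have c2 : ∀ μ < κ, ∃ i ≠ i₀, μ < #(A' i) := by
    intro μ hμ
    obtain ⟨i, hi, h⟩ := hcof' {i₀}ᶜ (by
      rw [← hJ]
      exact mk_compl_of_infinite _ (by simpa using one_lt_aleph0.trans_le (hIinf.trans_eq hJ.symm))) μ hμ
    exact ⟨i, hi, h⟩
  have c3 : κ.ord.cof = ℵ₀ → ∀ K : Set J, K.Infinite → ∀ μ < κ, ∃ i ∈ K, μ < #(A' i) := by
    intro hw K hK
    refine hcof' K (le_antisymm ((mk_set_le K).trans_eq hJ) ?_)
    rw [hI, hw]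
    rwa [← infinite_iff, Set.infinite_coe_iff]
  have htyJ : ∀ j : J, ty j.1 = k := fun j => j.2
  obtain ⟨k⟩ := k
  have h3 : k = 0 ∨ k = 1 ∨ k = 2 := by fin_cases k <;> simp
  rcases h3 with rfl | rfl | rfl
  · have hh : (∀ i, IsAntichain (· ≤ ·) (A' i)) ∨ (∀ i, WO (A' i)) :=
      Or.inl fun j => (hty j.1).1 (by rw [htyJ])
    exact ⟨hF'.part1 hh κ i₀ c1 c2, fun hw => hF'.part2 hh κ (c3 hw)⟩
  · have hh : (∀ i, IsAntichain (· ≤ ·) (A' i)) ∨ (∀ i, WO (A' i)) :=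
      Or.inr fun j => (hty j.1).2.1 (by rw [htyJ])
    exact ⟨hF'.part1 hh κ i₀ c1 c2, fun hw => hF'.part2 hh κ (c3 hw)⟩
  · have hh : (∀ i, @IsAntichain Lᵒᵈ (· ≤ ·) (A' i)) ∨ (∀ i, @WO Lᵒᵈ _ (A' i)) :=
      Or.inr fun j => (hty j.1).2.2 (by rw [htyJ])
    exact ⟨Has.dual (Fam.part1 (L := Lᵒᵈ) hF'.dual hh κ i₀ c1 c2),
      fun hw => Has.dual (Fam.part2 (L := Lᵒᵈ) hF'.dual hh κ (c3 hw))⟩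

end MLemma

/-- Main lemma: if `L` is a bounded partial order and `κ ≤ |L|` is a singular strong limit
cardinal, then `ν(L) > κ`; if moreover `cf(κ) = ℵ₀`, then `ν(L) > 2^κ`. -/
theorem main_lemma (L : Type u) [PartialOrder L] [BoundedOrder L] (κ : Cardinal.{u})
    (hκ : κ.IsStrongLimit) (hsing : κ.ord.cof < κ) (hL : κ ≤ #L) :
    κ < nu L ∧ (κ.ord.cof = ℵ₀ → 2 ^ κ < nu L) := by
  obtain ⟨h1, h2⟩ := MLemma.final L κ hκ hsing hL
  exact ⟨h1.lt_nu, fun h => (h2 h).lt_nu⟩
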